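/- Let K be a perfect field of characteristic p > 0 and A_n the n-th Weyl algebra over K with centre Z_n = K[X_1, …, X_{2n}], X_i = x_i^p. For an affine automorphism σ_{A,a} of A_n, given by x ↦ Ax + a with A = (a_{ij}) ∈ Sp_{2n}(K) and a = (a_i) ∈ K^{2n}, the restriction res_n(σ_{A,a}) to Z_n is the affine automorphism X ↦ A'X + a' where: if p > 2, A' = (a_{ij}^p) and a' = (a_i^p); and if p = 2, A' = (a_{ij}²) and a'_i = a_i² + Σ_{j=1}^n a_{ij} a_{i,n+j}. Consequently, the image of Aff(A_n) under res_n is the subgroup {affine automorphisms of Z_n with linear part in Sp_{2n}(K) and arbitrary translation in K^{2n}} ≅ Sp_{2n}(K)^{op} ⋉ K^{2n} of Aff(Z_n). -/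

import Mathlib

/-!
STATEMENT 18: Let `K` be a perfect field of characteristic `p > 0` and `A_n` the `n`-th
Weyl algebra, with centre `Z_n = K[X_1, …, X_{2n}]`, `X_k = x_k^p`.  For an affine
automorphism `σ_{A,a} : x ↦ Ax + a` with `A ∈ Sp_{2n}(K)`, `a ∈ K^{2n}`, the restriction
to the centre is `X ↦ A'X + a'` where, if `p > 2`, `A' = (a_{kl}^p)`, `a' = (a_k^p)`, and
if `p = 2`, `A' = (a_{kl}²)`, `a'_k = a_k² + Σ_{j=1}^n a_{k,j} a_{k,n+j}`.
Consequently the image of `Aff(A_n)` under `res_n` is exactly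
`Sp_{2n}(K)^{op} ⋉ K^{2n}`: every affine automorphism of `Z_n` with linear part in
`Sp_{2n}(K)` (acting on the generators `x_k^p`) arises as the restriction of an affine
automorphism of `A_n`.

Generators are indexed by `Fin n ⊕ Fin n` (`Sum.inl i = x_i`, `Sum.inr i = ∂_i`), matching
Mathlib's symplectic group `Matrix.symplecticGroup (Fin n) K`.
-/

noncomputable section

/-- The defining relations of the `n`-th Weyl algebra: the `x_i` (indexed by `Sum.inl`)
commute, the `∂_i` (indexed by `Sum.inr`) commute, and `∂_i x_j = x_j ∂_i + δ_{ij}`. -/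
inductive WeylRelN (K : Type*) [CommRing K] (n : ℕ) :
    FreeAlgebra K (Fin n ⊕ Fin n) → FreeAlgebra K (Fin n ⊕ Fin n) → Prop
  | xx (i j : Fin n) : WeylRelN K n
      (FreeAlgebra.ι K (Sum.inl i) * FreeAlgebra.ι K (Sum.inl j))
      (FreeAlgebra.ι K (Sum.inl j) * FreeAlgebra.ι K (Sum.inl i))
  | dd (i j : Fin n) : WeylRelN K n
      (FreeAlgebra.ι K (Sum.inr i) * FreeAlgebra.ι K (Sum.inr j))
      (FreeAlgebra.ι K (Sum.inr j) * FreeAlgebra.ι K (Sum.inr i))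
  | dx_ne (i j : Fin n) (h : i ≠ j) : WeylRelN K n
      (FreeAlgebra.ι K (Sum.inr i) * FreeAlgebra.ι K (Sum.inl j))
      (FreeAlgebra.ι K (Sum.inl j) * FreeAlgebra.ι K (Sum.inr i))
  | dx (i : Fin n) : WeylRelN K n
      (FreeAlgebra.ι K (Sum.inr i) * FreeAlgebra.ι K (Sum.inl i))
      (FreeAlgebra.ι K (Sum.inl i) * FreeAlgebra.ι K (Sum.inr i) + 1)

/-- The `n`-th Weyl algebra `A_n(K)`. -/
abbrev WeylN (K : Type*) [CommRing K] (n : ℕ) := RingQuot (WeylRelN K n)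

/-- The generators of the `n`-th Weyl algebra: `wgen K n (Sum.inl i) = x_i` and
`wgen K n (Sum.inr i) = ∂_i`. -/
def wgen (K : Type*) [CommRing K] (n : ℕ) (k : Fin n ⊕ Fin n) : WeylN K n :=
  RingQuot.mkAlgHom K (WeylRelN K n) (FreeAlgebra.ι K k)

open Polynomial in
/-- Hermite type polynomials with parameter `c`. -/
def hh {K : Type*} [CommRing K] (c : K) : ℕ → Polynomial K
  | 0 => 1
  | (m + 1) => X * hh c m - C c * derivative (hh c m)

open Polynomial in
lemma hh_derivative {K : Type*} [CommRing K] (c : K) (m : ℕ) :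
    derivative (hh c (m + 1)) = ((m + 1 : ℕ) : Polynomial K) * hh c m := by
  induction m with
  | zero => simp [hh]
  | succ m ih =>
    rw [hh, derivative_sub, derivative_mul, derivative_mul, ih]
    simp only [derivative_X, derivative_C, derivative_mul, derivative_natCast]
    rw [show hh c (m + 1) = X * hh c m - C c * derivative (hh c m) from rfl]
    push_cast
    ring

open Polynomial in
lemma hh_comp {K : Type*} [CommRing K] (c : K) (m : ℕ) :
    (hh c m).comp (-X) = (-1) ^ m * hh c m := by
  induction m with
  | zero => simp [hh]
  | succ m ih =>
    have h2 : (derivative (hh c m)).comp (-X) = - ((-1) ^ m * derivative (hh c m)) := by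
      have := congrArg derivative ih
      rw [derivative_comp] at this
      have h3 : derivative ((-1 : Polynomial K) ^ m) = 0 := by
        rw [show (-1 : Polynomial K) ^ m = C ((-1) ^ m) by simp]
        exact derivative_C
      simp only [derivative_neg, derivative_X, derivative_mul, h3] at this
      linear_combination -this
    rw [hh, sub_comp, mul_comp, mul_comp, ih, h2]
    simp
    ring

open Polynomial in
lemma hh_degree {K : Type*} [CommRing K] (c : K) (m : ℕ) :
    (hh c m).natDegree ≤ m ∧ (hh c m).coeff m = 1 := by
  induction m with
  | zero => simp [hh]
  | succ m ih =>
    have hd : (derivative (hh c m)).natDegree ≤ m :=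
      (natDegree_derivative_le _).trans (by omega)
    constructor
    · rw [hh]
      refine (natDegree_sub_le _ _).trans (max_le ?_ ?_)
      · refine natDegree_mul_le.trans ?_
        have := natDegree_X_le (R := K)
        omega
      · refine (natDegree_C_mul_le _ _).trans (by omega)
    · rw [hh, coeff_sub, coeff_X_mul, ih.2, coeff_C_mul,
        coeff_eq_zero_of_natDegree_lt (lt_of_le_of_lt hd (Nat.lt_succ_self m))]
      simp

open Polynomial in
lemma hh_prime {K : Type*} [Field K] (p : ℕ) [CharP K p] (hp : p.Prime) (h2 : 2 < p) (c : K) :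
    hh c p = X ^ p := by
  have hder : derivative (hh c p) = 0 := by
    obtain ⟨m, rfl⟩ : ∃ m, p = m + 1 := ⟨p - 1, by omega⟩
    rw [hh_derivative, CharP.cast_eq_zero, zero_mul]
  have h2K : (2 : K) ≠ 0 := by
    intro h
    have := (CharP.cast_eq_zero_iff K p 2).1 (by exact_mod_cast h)
    exact absurd (Nat.le_of_dvd (by norm_num) this) (by omega)
  ext i
  rw [coeff_X_pow]
  split_ifs with hi
  · rw [hi]; exact (hh_degree c p).2
  · rcases Nat.lt_or_ge p i with h | h
    · exact coeff_eq_zero_of_natDegree_lt (lt_of_le_of_lt (hh_degree c p).1 h)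
    · rcases i with _ | i
      · have := congrArg (eval 0) (hh_comp c p)
        have hodd : Odd p := hp.odd_of_ne_two (by omega)
        rw [hodd.neg_one_pow] at this
        simp only [eval_comp, eval_neg, eval_X, neg_zero, eval_mul, eval_one] at this
        rw [coeff_zero_eq_eval_zero]
        have h3 : 2 * eval 0 (hh c p) = 0 := by linear_combination this
        exact (mul_eq_zero.1 h3).resolve_left h2K
      · have := congrArg (fun f => coeff f i) hder
        simp only [coeff_derivative, coeff_zero] at this
        refine (mul_eq_zero.1 this).resolve_right ?_
        intro h0
        have := (CharP.cast_eq_zero_iff K p (i + 1)).1 (by exact_mod_cast h0)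
        exact absurd (Nat.le_of_dvd (by omega) this) (by omega)

section
variable {K : Type*} [Field K] {R : Type*} [Ring R] [Algebra K R]

open Polynomial in
lemma hh_pow (u v : R) (c : K) (h : u * v - v * u = algebraMap K R c) (m : ℕ) :
    (u + v) ^ m = aeval (LinearMap.mulLeft K u + LinearMap.mulRight K v) (hh c m) (1 : R) := by
  set P : Module.End K R := LinearMap.mulLeft K u + LinearMap.mulRight K v with hP
  have hPx : ∀ x, P x = u * x + x * v := fun x => rfl
  have hcomm : ∀ (f : Polynomial K), v * (aeval P f 1) - (aeval P f 1) * v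
      = - (c • aeval P (derivative f) (1 : R)) := by
    intro f
    induction f using Polynomial.induction_on' with
    | add f g hf hg =>
      simp only [map_add, LinearMap.add_apply, mul_add, add_mul, smul_add]
      rw [add_sub_add_comm, hf, hg]; abel
    | monomial k a =>
      suffices hk : ∀ k : ℕ, v * ((P ^ k) 1) - (P ^ k) 1 * v
          = - (c • (k : K) • (P ^ (k - 1)) (1 : R)) by
        rw [derivative_monomial, aeval_monomial, aeval_monomial]
        simp only [Module.algebraMap_end_eq_smul_id, Module.End.mul_apply,
          LinearMap.smul_apply, LinearMap.id_apply, mul_smul_comm, smul_mul_assoc]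
        rw [← smul_sub, hk, smul_neg, smul_comm a c, smul_smul a]
      intro k
      induction k with
      | zero => simp
      | succ k ih =>
        have hvu : v * u = u * v - algebraMap K R c := by rw [← h]; abel
        have e1 : (P ^ (k + 1)) (1 : R) = u * (P ^ k) 1 + (P ^ k) 1 * v := by
          rw [pow_succ', Module.End.mul_apply, hPx]
        set y := (P ^ k) (1 : R) with hy
        have e2 : (k : K) • y = (k : K) • (u * (P ^ (k - 1)) 1 + (P ^ (k - 1)) 1 * v) := by
          rcases k with _ | k
          · simp
          · rw [hy, pow_succ', Module.End.mul_apply, hPx]; rfl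
        have e3 : v * y = y * v - c • (k : K) • (P ^ (k - 1)) (1 : R) := by
          rw [sub_eq_add_neg, ← ih]; abel
        rw [e1, Nat.add_sub_cancel, ← hy, mul_add, ← mul_assoc, hvu, sub_mul, mul_assoc u, e3,
          ← mul_assoc, e3, Nat.cast_succ, add_smul, e2, ← Algebra.smul_def]
        simp only [mul_sub, sub_mul, add_mul, smul_add, mul_smul_comm, smul_mul_assoc, one_smul,
          mul_assoc, neg_add]
        abel
  induction m with
  | zero => simp [hh]
  | succ m ih =>
    rw [pow_succ', ih, hh, map_sub, map_mul, map_mul, aeval_X, aeval_C, LinearMap.sub_apply,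
      Module.End.mul_apply, Module.End.mul_apply, hPx, Module.algebraMap_end_apply,
      sub_eq_add_neg, ← hcomm, add_mul]
    abel

lemma add_pow_p (p : ℕ) [CharP K p] (hp : p.Prime) (h2 : 2 < p) (u v : R) (c : K)
    (h : u * v - v * u = algebraMap K R c) : (u + v) ^ p = u ^ p + v ^ p := by
  rcases subsingleton_or_nontrivial R with hR | hR
  · exact Subsingleton.elim _ _
  have : Fact p.Prime := ⟨hp⟩
  have : CharP (Module.End K R) p :=
    charP_of_injective_algebraMap (algebraMap K (Module.End K R)).injective p
  rw [hh_pow u v c h, hh_prime p hp h2, map_pow, Polynomial.aeval_X,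
    add_pow_char_of_commute]
  · simp [LinearMap.pow_mulLeft, LinearMap.pow_mulRight]
  · exact LinearMap.commute_mulLeft_right u v

lemma sum_pow_p (p : ℕ) [CharP K p] (hp : p.Prime) (h2 : 2 < p) {ι : Type*} (s : Finset ι)
    (y : ι → R) (hy : ∀ i j, ∃ c : K, y i * y j - y j * y i = algebraMap K R c) :
    (∑ i ∈ s, y i) ^ p = ∑ i ∈ s, y i ^ p := by
  classical
  choose c hc using hy
  induction s using Finset.induction_on with
  | empty => simp [hp.ne_zero]
  | insert i s hi ih =>
    rw [Finset.sum_insert hi, Finset.sum_insert hi,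
      add_pow_p p hp h2 (y i) _ (∑ j ∈ s, c i j), ih]
    rw [Finset.mul_sum, Finset.sum_mul, ← Finset.sum_sub_distrib, map_sum]
    exact Finset.sum_congr rfl fun j _ => hc i j

lemma sum_pow_comm (p : ℕ) [CharP K p] (hp : p.Prime) {ι : Type*} (s : Finset ι)
    (y : ι → R) (hy : ∀ i j, Commute (y i) (y j)) :
    (∑ i ∈ s, y i) ^ p = ∑ i ∈ s, y i ^ p := by
  classical
  rcases subsingleton_or_nontrivial R with hR | hR
  · exact Subsingleton.elim _ _
  have : Fact p.Prime := ⟨hp⟩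
  have : CharP R p := charP_of_injective_algebraMap (algebraMap K R).injective p
  induction s using Finset.induction_on with
  | empty => simp [hp.ne_zero]
  | insert i s hi ih =>
    rw [Finset.sum_insert hi, Finset.sum_insert hi, add_pow_char_of_commute, ih]
    exact Commute.sum_right _ _ _ fun j _ => hy i j

lemma gen_smul_comm (a b c : K) (x y : R) (h : x * y - y * x = algebraMap K R c) :
    (algebraMap K R a * x) * (algebraMap K R b * y)
    - (algebraMap K R b * y) * (algebraMap K R a * x) = algebraMap K R (a * c * b) := by
  simp only [← Algebra.smul_def, smul_mul_smul_comm]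
  rw [mul_comm b a, ← smul_sub, h, Algebra.smul_def, ← map_mul]
  congr 1; ring

lemma gen_add_comm (Y Z : R) (c d : K) :
    (Y + algebraMap K R c) * (Z + algebraMap K R d)
      - (Z + algebraMap K R d) * (Y + algebraMap K R c) = Y * Z - Z * Y := by
  have h1 := Algebra.commutes c Z
  have h2 := Algebra.commutes d Y
  have h3 := Algebra.commutes c (algebraMap K R d)
  simp only [add_mul, mul_add, h1, h2, h3]
  abel

lemma gen_mul_pow (a : K) (x : R) (m : ℕ) :
    (algebraMap K R a * x) ^ m = algebraMap K R (a ^ m) * x ^ m := by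
  rw [← Algebra.smul_def, smul_pow, Algebra.smul_def]
end

section
variable (K : Type*) [Field K] (n : ℕ)

lemma wgen_comm (k l : Fin n ⊕ Fin n) :
    wgen K n k * wgen K n l - wgen K n l * wgen K n k
      = algebraMap K (WeylN K n) (Matrix.J (Fin n) K k l) := by
  have key : ∀ x y, WeylRelN K n x y →
      RingQuot.mkAlgHom K (WeylRelN K n) x = RingQuot.mkAlgHom K (WeylRelN K n) y :=
    fun x y h => RingQuot.mkAlgHom_rel K h
  rcases k with i | i <;> rcases l with j | j
  · have := key _ _ (WeylRelN.xx i j)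
    simp only [map_mul] at this
    simp [Matrix.J, wgen, this]
  · by_cases hij : i = j
    · subst hij
      have := key _ _ (WeylRelN.dx i)
      simp only [map_mul, map_add, map_one] at this
      simp [Matrix.J, wgen, this]
    · have := key _ _ (WeylRelN.dx_ne j i (Ne.symm hij))
      simp only [map_mul] at this
      simp [Matrix.J, wgen, this, hij]
  · by_cases hij : i = j
    · subst hij
      have := key _ _ (WeylRelN.dx i)
      simp only [map_mul, map_add, map_one] at this
      simp [Matrix.J, wgen, this]
    · have := key _ _ (WeylRelN.dx_ne i j hij)
      simp only [map_mul] at this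
      simp [Matrix.J, wgen, this, hij]
  · have := key _ _ (WeylRelN.dd i j)
    simp only [map_mul] at this
    simp [Matrix.J, wgen, this]

/-- The image of the generator `k` under the affine map `(A, a)`. -/
def affImg (A : Matrix (Fin n ⊕ Fin n) (Fin n ⊕ Fin n) K) (a : Fin n ⊕ Fin n → K)
    (k : Fin n ⊕ Fin n) : WeylN K n :=
  (∑ l, algebraMap K (WeylN K n) (A k l) * wgen K n l) + algebraMap K (WeylN K n) (a k)

lemma smul_comm_gen (a b : K) (k l : Fin n ⊕ Fin n) :
    (algebraMap K (WeylN K n) a * wgen K n k) * (algebraMap K (WeylN K n) b * wgen K n l)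
    - (algebraMap K (WeylN K n) b * wgen K n l) * (algebraMap K (WeylN K n) a * wgen K n k)
      = algebraMap K (WeylN K n) (a * Matrix.J (Fin n) K k l * b) := by
  exact gen_smul_comm _ _ _ _ _ (wgen_comm K n k l)

lemma affImg_comm (A : Matrix (Fin n ⊕ Fin n) (Fin n ⊕ Fin n) K)
    (hA : A ∈ Matrix.symplecticGroup (Fin n) K) (a : Fin n ⊕ Fin n → K) (k m : Fin n ⊕ Fin n) :
    affImg K n A a k * affImg K n A a m - affImg K n A a m * affImg K n A a k
      = algebraMap K (WeylN K n) (Matrix.J (Fin n) K k m) := by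
  rw [affImg, affImg, gen_add_comm]
  have hJ := congrFun (congrFun (SymplecticGroup.mem_iff.1 hA) k) m
  rw [← hJ, Matrix.mul_apply, Finset.sum_mul_sum, Finset.sum_mul_sum]
  nth_rewrite 2 [Finset.sum_comm]
  rw [← Finset.sum_sub_distrib]
  simp only [← Finset.sum_sub_distrib, smul_comm_gen]
  rw [Finset.sum_comm]
  simp only [Matrix.mul_apply, Matrix.transpose_apply, Finset.sum_mul, map_sum]

/-- The affine endomorphism of the Weyl algebra. -/
def affHom (A : Matrix (Fin n ⊕ Fin n) (Fin n ⊕ Fin n) K)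
    (hA : A ∈ Matrix.symplecticGroup (Fin n) K) (a : Fin n ⊕ Fin n → K) :
    WeylN K n →ₐ[K] WeylN K n :=
  RingQuot.liftAlgHom K ⟨FreeAlgebra.lift K (affImg K n A a), by
    intro x y hxy
    have hc := affImg_comm K n A hA a
    cases hxy with
    | xx i j =>
      have := hc (Sum.inl i) (Sum.inl j)
      simpa [Matrix.J, sub_eq_zero] using this
    | dd i j =>
      have := hc (Sum.inr i) (Sum.inr j)
      simpa [Matrix.J, sub_eq_zero] using this
    | dx_ne i j h =>
      have := hc (Sum.inr i) (Sum.inl j)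
      simpa [Matrix.J, sub_eq_zero, h] using this
    | dx i =>
      have := hc (Sum.inr i) (Sum.inl i)
      simpa [Matrix.J, sub_eq_iff_eq_add, add_comm] using this⟩

lemma affHom_gen (A : Matrix (Fin n ⊕ Fin n) (Fin n ⊕ Fin n) K)
    (hA : A ∈ Matrix.symplecticGroup (Fin n) K) (a : Fin n ⊕ Fin n → K) (k : Fin n ⊕ Fin n) :
    affHom K n A hA a (wgen K n k) = affImg K n A a k := by
  rw [affHom, wgen, RingQuot.liftAlgHom_mkAlgHom_apply, FreeAlgebra.lift_ι_apply]

lemma affHom_comp (A B : Matrix (Fin n ⊕ Fin n) (Fin n ⊕ Fin n) K)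
    (hA : A ∈ Matrix.symplecticGroup (Fin n) K) (hB : B ∈ Matrix.symplecticGroup (Fin n) K)
    (a b : Fin n ⊕ Fin n → K) (h : B * A = 1) (h' : ∀ k, (∑ l, B k l * a l) + b k = 0) :
    (affHom K n A hA a).comp (affHom K n B hB b) = AlgHom.id K _ := by
  apply RingQuot.ringQuot_ext'
  apply FreeAlgebra.hom_ext
  funext k
  change affHom K n A hA a (affHom K n B hB b (wgen K n k)) = wgen K n k
  rw [affHom_gen, affImg, map_add, map_sum]
  simp only [map_mul, AlgHom.commutes, affHom_gen, affImg]
  simp only [mul_add, Finset.sum_add_distrib, Finset.mul_sum]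
  rw [add_assoc]
  simp only [← map_mul, ← map_sum, ← map_add, ← mul_assoc, h']
  rw [Finset.sum_comm]
  simp only [← Finset.sum_mul, ← map_sum, ← Matrix.mul_apply, h]
  simp [Matrix.one_apply, ite_apply]

lemma exists_aff (A : Matrix (Fin n ⊕ Fin n) (Fin n ⊕ Fin n) K)
    (hA : A ∈ Matrix.symplecticGroup (Fin n) K) (a : Fin n ⊕ Fin n → K) :
    ∃ σ : WeylN K n ≃ₐ[K] WeylN K n, ∀ k, σ (wgen K n k) = affImg K n A a k := by
  let S : Matrix.symplecticGroup (Fin n) K := ⟨A, hA⟩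
  have h1 : A * (S⁻¹).1 = 1 := congrArg Subtype.val (mul_inv_cancel S)
  have h2 : (S⁻¹).1 * A = 1 := congrArg Subtype.val (inv_mul_cancel S)
  set B := (S⁻¹).1 with hB
  refine ⟨AlgEquiv.ofAlgHom (affHom K n A hA a) (affHom K n B (S⁻¹).2 (-(B.mulVec a)))
    (affHom_comp K n _ _ _ _ _ _ h2 ?_) (affHom_comp K n _ _ _ _ _ _ h1 ?_), ?_⟩
  · intro k
    simp [Matrix.mulVec, dotProduct]
  · intro k
    change (A.mulVec (-(B.mulVec a))) k + a k = 0
    rw [Matrix.mulVec_neg, Matrix.mulVec_mulVec, h1]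
    simp
  · intro k
    exact affHom_gen K n A hA a k

lemma affImg_pow (p : ℕ) [CharP K p] (hp : p.Prime) (h2 : 2 < p)
    (A : Matrix (Fin n ⊕ Fin n) (Fin n ⊕ Fin n) K) (a : Fin n ⊕ Fin n → K) (k : Fin n ⊕ Fin n) :
    affImg K n A a k ^ p = (∑ l, algebraMap K (WeylN K n) (A k l ^ p) * wgen K n l ^ p)
            + algebraMap K (WeylN K n) (a k ^ p) := by
  rw [affImg, add_pow_p (K := K) p hp h2 _ _ 0, sum_pow_p (K := K) p hp h2, map_pow]
  · congr 1
    refine Finset.sum_congr rfl fun l _ => ?_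
    exact gen_mul_pow _ _ _
  · intro i j
    exact ⟨_, smul_comm_gen K n _ _ i j⟩
  · rw [← Algebra.commutes, sub_self, map_zero]

lemma affImg_sq [CharP K 2]
    (A : Matrix (Fin n ⊕ Fin n) (Fin n ⊕ Fin n) K) (a : Fin n ⊕ Fin n → K) (k : Fin n ⊕ Fin n) :
    affImg K n A a k ^ 2 = (∑ l, algebraMap K (WeylN K n) (A k l ^ 2) * wgen K n l ^ 2)
            + algebraMap K (WeylN K n)
              (a k ^ 2 + ∑ j : Fin n, A k (Sum.inl j) * A k (Sum.inr j)) := by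
  have two : ∀ z : WeylN K n, z + z = 0 := by
    intro z
    rw [← two_smul K z, show (2 : K) = 0 from CharTwo.two_eq_zero, zero_smul]
  have hsum : ∀ e : Fin n → Fin n ⊕ Fin n,
      (∀ i j, Matrix.J (Fin n) K (e i) (e j) = 0) →
      (∑ i, algebraMap K (WeylN K n) (A k (e i)) * wgen K n (e i)) ^ 2
        = ∑ i, algebraMap K (WeylN K n) (A k (e i) ^ 2) * wgen K n (e i) ^ 2 := by
    intro e he
    rw [sum_pow_comm (K := K) 2 Nat.prime_two]
    · refine Finset.sum_congr rfl fun l _ => ?_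
      exact gen_mul_pow _ _ _
    · intro i j
      have := smul_comm_gen K n (A k (e i)) (A k (e j)) (e i) (e j)
      rw [he, mul_zero, zero_mul, map_zero] at this
      exact sub_eq_zero.1 this
  rw [affImg, Fintype.sum_sum_type, Fintype.sum_sum_type,
    ← hsum Sum.inl (by simp [Matrix.J]), ← hsum Sum.inr (by simp [Matrix.J])]
  have hc : (∑ i, algebraMap K (WeylN K n) (A k (Sum.inr i)) * wgen K n (Sum.inr i))
      * (∑ i, algebraMap K (WeylN K n) (A k (Sum.inl i)) * wgen K n (Sum.inl i))
      - (∑ i, algebraMap K (WeylN K n) (A k (Sum.inl i)) * wgen K n (Sum.inl i))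
      * (∑ i, algebraMap K (WeylN K n) (A k (Sum.inr i)) * wgen K n (Sum.inr i))
      = algebraMap K (WeylN K n) (∑ j : Fin n, A k (Sum.inl j) * A k (Sum.inr j)) := by
    rw [Finset.sum_mul_sum, Finset.sum_mul_sum]
    nth_rewrite 2 [Finset.sum_comm]
    simp only [← Finset.sum_sub_distrib, smul_comm_gen]
    simp [Matrix.J, Matrix.one_apply, mul_comm, apply_ite (algebraMap K (WeylN K n))]
  rw [map_add, ← hc, map_pow]
  set Y := ∑ i, algebraMap K (WeylN K n) (A k (Sum.inl i)) * wgen K n (Sum.inl i)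
  set Z := ∑ i, algebraMap K (WeylN K n) (A k (Sum.inr i)) * wgen K n (Sum.inr i)
  have hY : Y * algebraMap K (WeylN K n) (a k) = algebraMap K (WeylN K n) (a k) * Y :=
    (Algebra.commutes _ _).symm
  have hZ : Z * algebraMap K (WeylN K n) (a k) = algebraMap K (WeylN K n) (a k) * Z :=
    (Algebra.commutes _ _).symm
  set t := algebraMap K (WeylN K n) (a k)
  have e : (Y + Z + t) ^ 2 = Y ^ 2 + Z ^ 2 + (t ^ 2 + (Z * Y - Y * Z))
      + (Y * Z + Y * Z) + (t * Y + t * Y) + (t * Z + t * Z) := by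
    simp only [pow_two, add_mul, mul_add, hY, hZ]
    abel
  rw [e, two, two, two]
  simp

end

theorem statement18 (p n : ℕ) (hp : p.Prime) (K : Type*) [Field K] [CharP K p]
    (hperf : Function.Surjective fun a : K => a ^ p) :
    (∀ A : Matrix (Fin n ⊕ Fin n) (Fin n ⊕ Fin n) K, A ∈ Matrix.symplecticGroup (Fin n) K →
      ∀ a : Fin n ⊕ Fin n → K, ∀ σ : WeylN K n ≃ₐ[K] WeylN K n,
      (∀ k, σ (wgen K n k)
          = (∑ l, algebraMap K (WeylN K n) (A k l) * wgen K n l)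
            + algebraMap K (WeylN K n) (a k)) →
      (2 < p → ∀ k, σ (wgen K n k ^ p)
          = (∑ l, algebraMap K (WeylN K n) (A k l ^ p) * wgen K n l ^ p)
            + algebraMap K (WeylN K n) (a k ^ p)) ∧
      (p = 2 → ∀ k, σ (wgen K n k ^ p)
          = (∑ l, algebraMap K (WeylN K n) (A k l ^ 2) * wgen K n l ^ p)
            + algebraMap K (WeylN K n)
                (a k ^ 2 + ∑ j : Fin n, A k (Sum.inl j) * A k (Sum.inr j)))) ∧
    (∀ B : Matrix (Fin n ⊕ Fin n) (Fin n ⊕ Fin n) K, B ∈ Matrix.symplecticGroup (Fin n) K →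
      ∀ b : Fin n ⊕ Fin n → K,
      ∃ σ : WeylN K n ≃ₐ[K] WeylN K n,
        (∃ A ∈ Matrix.symplecticGroup (Fin n) K, ∃ a : Fin n ⊕ Fin n → K,
          ∀ k, σ (wgen K n k)
            = (∑ l, algebraMap K (WeylN K n) (A k l) * wgen K n l)
              + algebraMap K (WeylN K n) (a k)) ∧
        ∀ k, σ (wgen K n k ^ p)
          = (∑ l, algebraMap K (WeylN K n) (B k l) * wgen K n l ^ p)
            + algebraMap K (WeylN K n) (b k)) := by
  have : Fact p.Prime := ⟨hp⟩
  have main1 : ∀ (A : Matrix (Fin n ⊕ Fin n) (Fin n ⊕ Fin n) K) (a : Fin n ⊕ Fin n → K)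
      (σ : WeylN K n ≃ₐ[K] WeylN K n),
      (∀ k, σ (wgen K n k) = affImg K n A a k) →
      (2 < p → ∀ k, σ (wgen K n k ^ p)
          = (∑ l, algebraMap K (WeylN K n) (A k l ^ p) * wgen K n l ^ p)
            + algebraMap K (WeylN K n) (a k ^ p)) ∧
      (p = 2 → ∀ k, σ (wgen K n k ^ p)
          = (∑ l, algebraMap K (WeylN K n) (A k l ^ 2) * wgen K n l ^ p)
            + algebraMap K (WeylN K n)
                (a k ^ 2 + ∑ j : Fin n, A k (Sum.inl j) * A k (Sum.inr j))) := by
    intro A a σ hσ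
    constructor
    · intro h2 k
      rw [map_pow, hσ, affImg_pow K n p hp h2]
    · intro h2 k
      subst h2
      rw [map_pow, hσ, affImg_sq]
  refine ⟨fun A _ a σ hσ => main1 A a σ hσ, ?_⟩
  intro B hB b
  choose r hr using hperf
  have hr' : ∀ c, r c ^ p = c := hr
  let A : Matrix (Fin n ⊕ Fin n) (Fin n ⊕ Fin n) K := fun k l => r (B k l)
  have hAB : A.map (frobenius K p) = B := by
    ext k l
    exact hr' _
  have hJ : (Matrix.J (Fin n) K).map (frobenius K p) = Matrix.J (Fin n) K := by
    ext k l
    rcases k with i | i <;> rcases l with j | j <;>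
      simp [Matrix.J, Matrix.one_apply, apply_ite (frobenius K p)]
  have hA : A ∈ Matrix.symplecticGroup (Fin n) K := by
    rw [SymplecticGroup.mem_iff] at hB ⊢
    apply Matrix.map_injective (frobenius_inj K p)
    beta_reduce
    rw [Matrix.map_mul, Matrix.map_mul, Matrix.transpose_map, hAB, hJ, hB]
  rcases hp.two_le.lt_or_eq with h2 | h2
  · obtain ⟨σ, hσ⟩ := exists_aff K n A hA (fun k => r (b k))
    refine ⟨σ, ⟨A, hA, _, hσ⟩, fun k => ?_⟩
    rw [(main1 A _ σ hσ).1 h2 k]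
    simp only [A, hr']
  · obtain ⟨σ, hσ⟩ := exists_aff K n A hA
      (fun k => r (b k - ∑ j : Fin n, A k (Sum.inl j) * A k (Sum.inr j)))
    refine ⟨σ, ⟨A, hA, _, hσ⟩, fun k => ?_⟩
    subst h2
    rw [(main1 A _ σ hσ).2 rfl k, hr', sub_add_cancel]
    simp only [A, hr']
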